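/- In the monoid H = {0} ∪ (N_{>0} × Z/2) with addition given by (m, a) + (n, b) = (m+n, a+b) and 0 as unit, the map (rk, Arf) sending the isomorphism class of a quadratic refinement q of (Z^{2g}, Ω_g) (with g ≥ 1) to (g, Arf(q)), and the class of the trivial refinement on Z^0 to 0, defines a monoid isomorphism from the monoid of Sp-orbits of quadratic refinements (under direct sum) to H. -/

import Mathlib

/-!
Write `Ω` for the symplectic pairing. The difference of two quadratic refinements of `Ω` is
additive, so a refinement is determined by its values on the standard basis (`quad_ext`); in
coordinates `q x = ∑ i, (q(e_i) x_{e_i} + q(f_i) x_{f_i} + x_{e_i} x_{f_i})` (`quad_formula`).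

*Equal Arf invariants give the same orbit.* Given `q`, `q'`, there is a vector `w` with
`q' = q + Ω(·, w)`, and the coordinate formula yields `Arf q' = Arf q + q w`. When the Arf
invariants agree, `q w = 0`, and then the transvection `T_w x = x + Ω(x, w) w` satisfies
`q (T_w x) = q x + Ω(x, w) q w + Ω(x, w) ^ 2 = q x + Ω(x, w) = q' x`. A single transvection
therefore carries `q` to `q'`.

*The Arf invariant is constant on orbits.* A refinement descends to `𝔽₂^{2g}`, and its Gauss sum
`∑ v, (-1) ^ q(v)` factors over the hyperbolic planes and equals `2 ^ g (-1) ^ Arf(q)`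
(`gauss_eq`). A symplectic automorphism permutes `𝔽₂^{2g}` and so preserves the Gauss sum.

Surjectivity is seen from the coordinate formula, which defines a refinement for any prescribed
values on the basis.
-/

/-- The standard symplectic pairing on `ℤ^{2g}`, with basis indexed by `Fin g × Bool`
(`(i, false)` is `e_i` and `(i, true)` is `f_i`). -/
def sympPair (g : ℕ) (x y : Fin g × Bool → ℤ) : ℤ :=
  ∑ i : Fin g, (x (i, false) * y (i, true) - x (i, true) * y (i, false))

/-- A quadratic refinement of the standard symplectic form `Ω_g` on `ℤ^{2g}`. -/
def IsQuadRef (g : ℕ) (q : (Fin g × Bool → ℤ) → ZMod 2) : Prop :=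
  ∀ x y, q (x + y) = q x + q y + ((sympPair g x y : ℤ) : ZMod 2)

/-- The type of quadratic refinements of `(ℤ^{2g}, Ω_g)`. -/
def QRef (g : ℕ) : Type := {q : (Fin g × Bool → ℤ) → ZMod 2 // IsQuadRef g q}

/-- The standard basis vector of `ℤ^{2g}` indexed by `p`. -/
def stdBasis (g : ℕ) (p : Fin g × Bool) : Fin g × Bool → ℤ :=
  fun r => if r = p then 1 else 0

/-- The Arf invariant `Arf(q) = ∑ q(e_i) q(f_i)`. -/
def arf (g : ℕ) (q : (Fin g × Bool → ℤ) → ZMod 2) : ZMod 2 :=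
  ∑ i : Fin g, q (stdBasis g (i, false)) * q (stdBasis g (i, true))

/-- The direct sum `q ⊕ q'` on `ℤ^{2g} ⊕ ℤ^{2g'} ≅ ℤ^{2(g+g')}`. -/
def dsumFun (g g' : ℕ) (q : (Fin g × Bool → ℤ) → ZMod 2)
    (q' : (Fin g' × Bool → ℤ) → ZMod 2) : (Fin (g + g') × Bool → ℤ) → ZMod 2 :=
  fun z => q (fun p => z (Fin.castAdd g' p.1, p.2)) + q' (fun p => z (Fin.natAdd g p.1, p.2))

theorem isQuadRef_dsum {g g' : ℕ} {q : (Fin g × Bool → ℤ) → ZMod 2}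
    {q' : (Fin g' × Bool → ℤ) → ZMod 2} (hq : IsQuadRef g q) (hq' : IsQuadRef g' q') :
    IsQuadRef (g + g') (dsumFun g g' q q') := by
  intro x y
  have hsplit : sympPair (g + g') x y =
      sympPair g (fun p => x (Fin.castAdd g' p.1, p.2)) (fun p => y (Fin.castAdd g' p.1, p.2)) +
      sympPair g' (fun p => x (Fin.natAdd g p.1, p.2)) (fun p => y (Fin.natAdd g p.1, p.2)) := by
    simp [sympPair, Fin.sum_univ_add]
    ring
  have h1 := hq (fun p => x (Fin.castAdd g' p.1, p.2)) (fun p => y (Fin.castAdd g' p.1, p.2))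
  have h2 := hq' (fun p => x (Fin.natAdd g p.1, p.2)) (fun p => y (Fin.natAdd g p.1, p.2))
  show q (fun p => (x + y) (Fin.castAdd g' p.1, p.2)) +
      q' (fun p => (x + y) (Fin.natAdd g p.1, p.2)) = _
  have e1 : (fun p : Fin g × Bool => (x + y) (Fin.castAdd g' p.1, p.2)) =
      (fun p => x (Fin.castAdd g' p.1, p.2)) + fun p => y (Fin.castAdd g' p.1, p.2) := rfl
  have e2 : (fun p : Fin g' × Bool => (x + y) (Fin.natAdd g p.1, p.2)) =
      (fun p => x (Fin.natAdd g p.1, p.2)) + fun p => y (Fin.natAdd g p.1, p.2) := rfl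
  rw [e1, e2, h1, h2, hsplit]
  show _ = (q _ + q' _) + (q _ + q' _) + _
  push_cast
  ring

/-- The graded set of all quadratic refinements, over all genera. -/
def R19 : Type := Σ g : ℕ, QRef g

/-- Direct sum of quadratic refinements, as a binary operation on `R19`. -/
def addR (x y : R19) : R19 :=
  ⟨x.1 + y.1, ⟨dsumFun x.1 y.1 x.2.1 y.2.1, isQuadRef_dsum x.2.2 y.2.2⟩⟩

/-- A linear automorphism of `ℤ^{2g}` is symplectic if it preserves the pairing. -/
def IsSymp (g : ℕ) (φ : (Fin g × Bool → ℤ) ≃ₗ[ℤ] (Fin g × Bool → ℤ)) : Prop :=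
  ∀ x y, sympPair g (φ x) (φ y) = sympPair g x y

/-- Two quadratic refinements are related iff they have the same genus and lie in the same
orbit of the precomposition action of `Sp_{2g}(ℤ)`. -/
def relR (x y : R19) : Prop :=
  ∃ h : x.1 = y.1, ∃ φ : (Fin y.1 × Bool → ℤ) ≃ₗ[ℤ] (Fin y.1 × Bool → ℤ),
    IsSymp y.1 φ ∧ y.2.1 = (cast (congrArg QRef h) x.2 : QRef y.1).1 ∘ ⇑φ

/-- The monoid `H = {0} ∪ (ℕ_{>0} × ℤ/2)`, realized as the additive submonoid of
`ℕ × ℤ/2` of pairs `(m, a)` with `a = 0` whenever `m = 0`. -/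
def Hmon : AddSubmonoid (ℕ × ZMod 2) where
  carrier := {p | p.1 = 0 → p.2 = 0}
  zero_mem' := fun _ => rfl
  add_mem' := by
    intro a b ha hb
    simp only [Set.mem_setOf_eq] at *
    intro h
    have h1 : a.1 + b.1 = 0 := h
    have ha1 : a.1 = 0 := by omega
    have hb1 : b.1 = 0 := by omega
    show a.2 + b.2 = 0
    rw [ha ha1, hb hb1, add_zero]

/-- The map `(rk, Arf)` from quadratic refinements to `H`. -/
def phi (x : R19) : Hmon :=
  ⟨(x.1, arf x.1 x.2.1), by
    intro h
    rcases x with ⟨g, q⟩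
    simp only at h
    subst h
    simp [arf]⟩

/-! ### The symplectic pairing and refinements in coordinates -/

theorem sympPair_add_left (g : ℕ) (x y z : Fin g × Bool → ℤ) :
    sympPair g (x + y) z = sympPair g x z + sympPair g y z := by
  simp only [sympPair, ← Finset.sum_add_distrib, Pi.add_apply]
  exact Finset.sum_congr rfl fun i _ => by ring

theorem sympPair_smul_left (g : ℕ) (c : ℤ) (x z : Fin g × Bool → ℤ) :
    sympPair g (c • x) z = c * sympPair g x z := by
  simp only [sympPair, Finset.mul_sum, Pi.smul_apply, smul_eq_mul]
  exact Finset.sum_congr rfl fun i _ => by ring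

theorem sympPair_neg_swap (g : ℕ) (x y : Fin g × Bool → ℤ) :
    sympPair g x y = - sympPair g y x := by
  simp only [sympPair, ← Finset.sum_neg_distrib]
  exact Finset.sum_congr rfl fun i _ => by ring

theorem sympPair_self (g : ℕ) (x : Fin g × Bool → ℤ) : sympPair g x x = 0 := by
  simp only [sympPair]
  exact Finset.sum_eq_zero fun i _ => by ring

theorem sympPair_add_right (g : ℕ) (x y z : Fin g × Bool → ℤ) :
    sympPair g x (y + z) = sympPair g x y + sympPair g x z := by
  rw [sympPair_neg_swap, sympPair_add_left, sympPair_neg_swap g x y, sympPair_neg_swap g x z]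
  ring

theorem sympPair_smul_right (g : ℕ) (c : ℤ) (x z : Fin g × Bool → ℤ) :
    sympPair g x (c • z) = c * sympPair g x z := by
  rw [sympPair_neg_swap, sympPair_smul_left, sympPair_neg_swap g x z]
  ring

theorem sympPair_stdBasis_false (g : ℕ) (i : Fin g) (w : Fin g × Bool → ℤ) :
    sympPair g (stdBasis g (i, false)) w = w (i, true) := by
  simp [sympPair, stdBasis, Prod.ext_iff]

theorem sympPair_stdBasis_true (g : ℕ) (i : Fin g) (w : Fin g × Bool → ℤ) :
    sympPair g (stdBasis g (i, true)) w = - w (i, false) := by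
  simp [sympPair, stdBasis, Prod.ext_iff]

theorem zmod2_add_self (a : ZMod 2) : a + a = 0 := by revert a; decide

theorem zmod2_mul_self (a : ZMod 2) : a * a = a := by revert a; decide

theorem zmod2_cast_val (a : ZMod 2) : (((a.val : ℕ) : ℤ) : ZMod 2) = a := by revert a; decide

theorem zmod2_neg (a : ZMod 2) : -a = a := by revert a; decide

/-- Two quadratic refinements agreeing on the standard basis are equal, since their difference is
additive. -/
theorem quad_ext {g : ℕ} {q q' : (Fin g × Bool → ℤ) → ZMod 2} (hq : IsQuadRef g q)
    (hq' : IsQuadRef g q') (h : ∀ p, q (stdBasis g p) = q' (stdBasis g p)) : q = q' := by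
  let d : (Fin g × Bool → ℤ) →+ ZMod 2 := AddMonoidHom.mk' (fun x => q x - q' x) (by
    intro x y
    rw [hq, hq']
    ring)
  have hd : d.toIntLinearMap = 0 := by
    apply (Pi.basisFun ℤ (Fin g × Bool)).ext
    intro p
    have e : Pi.basisFun ℤ (Fin g × Bool) p = stdBasis g p := by
      ext r
      simp [stdBasis, Pi.single_apply]
    rw [e]
    show q (stdBasis g p) - q' (stdBasis g p) = 0
    rw [h, sub_self]
  ext1 x
  have := LinearMap.congr_fun hd x
  exact sub_eq_zero.mp this

/-- The quadratic refinement with prescribed values `a` on the standard basis. -/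
def stdQuad (g : ℕ) (a : Fin g × Bool → ZMod 2) (x : Fin g × Bool → ℤ) : ZMod 2 :=
  ∑ i : Fin g, (a (i, false) * x (i, false) + a (i, true) * x (i, true) +
    x (i, false) * x (i, true))

theorem stdQuad_isQuadRef (g : ℕ) (a : Fin g × Bool → ZMod 2) : IsQuadRef g (stdQuad g a) := by
  intro x y
  simp only [stdQuad, sympPair, Int.cast_sum, ← Finset.sum_add_distrib, Pi.add_apply]
  refine Finset.sum_congr rfl fun i _ => ?_
  push_cast
  rw [sub_eq_add_neg, zmod2_neg]
  ring

theorem stdQuad_stdBasis (g : ℕ) (a : Fin g × Bool → ZMod 2) (p : Fin g × Bool) :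
    stdQuad g a (stdBasis g p) = a p := by
  obtain ⟨i, b⟩ := p
  cases b <;> simp [stdQuad, stdBasis, Prod.ext_iff]

theorem quad_formula {g : ℕ} {q : (Fin g × Bool → ℤ) → ZMod 2} (hq : IsQuadRef g q) :
    q = stdQuad g (fun p => q (stdBasis g p)) :=
  quad_ext hq (stdQuad_isQuadRef g _) fun p => by rw [stdQuad_stdBasis]

theorem quad_smul {g : ℕ} {q : (Fin g × Bool → ℤ) → ZMod 2} (hq : IsQuadRef g q)
    (c : ℤ) (x : Fin g × Bool → ℤ) : q (c • x) = c * q x := by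
  rw [quad_formula hq]
  simp only [stdQuad, Finset.mul_sum, Pi.smul_apply, smul_eq_mul]
  refine Finset.sum_congr rfl fun i _ => ?_
  push_cast
  have := zmod2_mul_self (c : ZMod 2)
  linear_combination ((x (i, false) : ZMod 2) * x (i, true)) * this

/-- A quadratic refinement only depends on the coordinates modulo `2`. -/
theorem quad_congr {g : ℕ} {q : (Fin g × Bool → ℤ) → ZMod 2} (hq : IsQuadRef g q)
    {x y : Fin g × Bool → ℤ} (h : ∀ p, (x p : ZMod 2) = y p) : q x = q y := by
  rw [quad_formula hq]
  simp only [stdQuad, h]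

theorem isQuadRef_comp {g : ℕ} {q : (Fin g × Bool → ℤ) → ZMod 2} (hq : IsQuadRef g q)
    {φ : (Fin g × Bool → ℤ) ≃ₗ[ℤ] (Fin g × Bool → ℤ)} (hφ : IsSymp g φ) :
    IsQuadRef g (q ∘ φ) := by
  intro x y
  simp only [Function.comp_apply, map_add]
  rw [hq, hφ]

/-! ### Transvections -/

/-- The symplectic transvection `x ↦ x + Ω(x, w) w`. -/
def transv (g : ℕ) (w : Fin g × Bool → ℤ) :
    (Fin g × Bool → ℤ) ≃ₗ[ℤ] (Fin g × Bool → ℤ) where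
  toFun x := x + sympPair g x w • w
  invFun x := x + (-sympPair g x w) • w
  map_add' x y := by
    rw [sympPair_add_left, add_smul]
    abel
  map_smul' c x := by
    rw [sympPair_smul_left, mul_smul, RingHom.id_apply, smul_add]
  left_inv x := by
    show x + sympPair g x w • w + (-sympPair g (x + sympPair g x w • w) w) • w = x
    rw [sympPair_add_left, sympPair_smul_left, sympPair_self, mul_zero, add_zero, neg_smul]
    abel
  right_inv x := by
    show x + (-sympPair g x w) • w + (sympPair g (x + (-sympPair g x w) • w) w) • w = x
    rw [sympPair_add_left, sympPair_smul_left, sympPair_self, mul_zero, add_zero, neg_smul]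
    abel

theorem transv_apply (g : ℕ) (w x : Fin g × Bool → ℤ) :
    transv g w x = x + sympPair g x w • w := rfl

theorem transv_isSymp (g : ℕ) (w : Fin g × Bool → ℤ) : IsSymp g (transv g w) := by
  intro x y
  simp only [transv_apply, sympPair_add_left, sympPair_add_right, sympPair_smul_left,
    sympPair_smul_right, sympPair_self]
  rw [sympPair_neg_swap g w y]
  ring

theorem quad_transv {g : ℕ} {q : (Fin g × Bool → ℤ) → ZMod 2} (hq : IsQuadRef g q)
    {w : Fin g × Bool → ℤ} (hw : q w = 0) (x : Fin g × Bool → ℤ) :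
    q (transv g w x) = q x + (sympPair g x w : ZMod 2) := by
  rw [transv_apply, hq, quad_smul hq, hw, sympPair_smul_right]
  push_cast
  rw [zmod2_mul_self]
  ring

/-- Refinements with equal Arf invariants differ by a single transvection. -/
theorem exists_symp_of_arf_eq {g : ℕ} {q q' : (Fin g × Bool → ℤ) → ZMod 2}
    (hq : IsQuadRef g q) (hq' : IsQuadRef g q') (h : arf g q = arf g q') :
    ∃ φ : (Fin g × Bool → ℤ) ≃ₗ[ℤ] (Fin g × Bool → ℤ), IsSymp g φ ∧ q' = q ∘ ⇑φ := by
  -- `w` is chosen so that `Ω(·, w)` reduces to `q' + q` on the basis; pairing with `w`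
  -- swaps the two coordinates in each hyperbolic plane.
  let w : Fin g × Bool → ℤ := fun p =>
    ((q' (stdBasis g (p.1, !p.2)) + q (stdBasis g (p.1, !p.2))).val : ℤ)
  have hwc : ∀ p, (w p : ZMod 2) = q' (stdBasis g (p.1, !p.2)) + q (stdBasis g (p.1, !p.2)) := by
    intro p
    exact zmod2_cast_val _
  have hw : q w = 0 := by
    have h1 : q w = arf g q' + arf g q := by
      rw [congrFun (quad_formula hq) w]
      simp only [stdQuad, hwc, arf, ← Finset.sum_add_distrib, Bool.not_true, Bool.not_false]
      refine Finset.sum_congr rfl fun i _ => ?_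
      generalize q (stdBasis g (i, false)) = a
      generalize q (stdBasis g (i, true)) = b
      generalize q' (stdBasis g (i, false)) = a'
      generalize q' (stdBasis g (i, true)) = b'
      revert a b a' b'
      decide
    rw [h1, h, zmod2_add_self]
  refine ⟨transv g w, transv_isSymp g w, ?_⟩
  refine quad_ext hq' (isQuadRef_comp hq (transv_isSymp g w)) ?_
  rintro ⟨i, b⟩
  rw [Function.comp_apply, quad_transv hq hw]
  cases b
  · rw [sympPair_stdBasis_false, hwc, add_comm, add_assoc, Bool.not_true, zmod2_add_self, add_zero]
  · rw [sympPair_stdBasis_true, Int.cast_neg, zmod2_neg, hwc, add_comm, add_assoc, Bool.not_false,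
      zmod2_add_self, add_zero]

/-! ### Gauss sums and invariance of the Arf invariant -/

/-- The sign `(-1) ^ a` of `a : ZMod 2`, as an integer. -/
def sgn (a : ZMod 2) : ℤ := if a = 0 then 1 else -1

theorem sgn_add (a b : ZMod 2) : sgn (a + b) = sgn a * sgn b := by revert a b; decide

theorem sgn_injective : Function.Injective sgn := by
  intro a b
  revert a b
  decide

theorem sgn_sum {ι : Type*} (s : Finset ι) (f : ι → ZMod 2) :
    sgn (∑ i ∈ s, f i) = ∏ i ∈ s, sgn (f i) := by
  classical
  induction s using Finset.induction_on with
  | empty => simp [sgn]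
  | insert a s ha ih => rw [Finset.sum_insert ha, Finset.prod_insert ha, sgn_add, ih]

/-- The lift of a vector over `𝔽₂` to an integral vector with entries in `{0, 1}`. -/
def lift2 (g : ℕ) (v : Fin g × Bool → ZMod 2) : Fin g × Bool → ℤ := fun p => ((v p).val : ℤ)

theorem lift2_cast (g : ℕ) (v : Fin g × Bool → ZMod 2) (p : Fin g × Bool) :
    ((lift2 g v p : ℤ) : ZMod 2) = v p := by
  exact zmod2_cast_val _

/-- The Gauss sum of the reduction of `q` to `𝔽₂^{2g}`. -/
def gauss (g : ℕ) (q : (Fin g × Bool → ℤ) → ZMod 2) : ℤ :=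
  ∑ v : Fin g × Bool → ZMod 2, sgn (q (lift2 g v))

theorem gauss_plane (a b : ZMod 2) :
    ∑ u : Bool → ZMod 2, sgn (a * u false + b * u true + u false * u true) = 2 * sgn (a * b) := by
  revert a b
  decide

theorem gauss_eq {g : ℕ} {q : (Fin g × Bool → ℤ) → ZMod 2} (hq : IsQuadRef g q) :
    gauss g q = 2 ^ g * sgn (arf g q) := by
  unfold gauss
  rw [← Equiv.sum_comp (Equiv.curry (Fin g) Bool (ZMod 2)).symm]
  have h1 : ∀ u : Fin g → Bool → ZMod 2,
      sgn (q (lift2 g ((Equiv.curry (Fin g) Bool (ZMod 2)).symm u))) =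
      ∏ i, sgn (q (stdBasis g (i, false)) * u i false + q (stdBasis g (i, true)) * u i true +
        u i false * u i true) := by
    intro u
    rw [congrFun (quad_formula hq) _]
    simp only [stdQuad, sgn_sum, lift2_cast]
    rfl
  simp only [h1]
  rw [← Fintype.prod_sum (fun (i : Fin g) (u : Bool → ZMod 2) =>
    sgn (q (stdBasis g (i, false)) * u false + q (stdBasis g (i, true)) * u true +
        u false * u true))]
  simp only [gauss_plane, Finset.prod_mul_distrib, arf, sgn_sum]
  simp

/-- Integral linear maps preserve congruence modulo `2`. -/
theorem linear_congr {g : ℕ} (φ : (Fin g × Bool → ℤ) →ₗ[ℤ] (Fin g × Bool → ℤ))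
    {x y : Fin g × Bool → ℤ} (h : ∀ p, (x p : ZMod 2) = y p) (p : Fin g × Bool) :
    (φ x p : ZMod 2) = φ y p := by
  have hdvd : ∀ p, (2 : ℤ) ∣ y p - x p := fun p =>
    (ZMod.intCast_eq_intCast_iff_dvd_sub (x p) (y p) 2).mp (h p)
  choose z hz using hdvd
  have hy : y = x + (2 : ℤ) • z := by
    ext p
    simp only [Pi.add_apply, Pi.smul_apply, smul_eq_mul]
    linarith [hz p]
  rw [hy, map_add, map_smul]
  simp only [Pi.add_apply, Pi.smul_apply, smul_eq_mul]
  push_cast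
  rw [show (2 : ZMod 2) = 0 from rfl]
  ring

/-- The permutation of `𝔽₂^{2g}` induced by an automorphism of `ℤ^{2g}`. -/
def red2 (g : ℕ) (φ : (Fin g × Bool → ℤ) ≃ₗ[ℤ] (Fin g × Bool → ℤ)) :
    (Fin g × Bool → ZMod 2) ≃ (Fin g × Bool → ZMod 2) where
  toFun v p := (φ (lift2 g v) p : ZMod 2)
  invFun v p := (φ.symm (lift2 g v) p : ZMod 2)
  left_inv v := by
    ext1 p
    have := linear_congr (φ.symm : (Fin g × Bool → ℤ) →ₗ[ℤ] (Fin g × Bool → ℤ))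
      (lift2_cast g (fun p => (φ (lift2 g v) p : ZMod 2))) p
    simpa [lift2_cast] using this
  right_inv v := by
    ext1 p
    have := linear_congr (φ : (Fin g × Bool → ℤ) →ₗ[ℤ] (Fin g × Bool → ℤ))
      (lift2_cast g (fun p => (φ.symm (lift2 g v) p : ZMod 2))) p
    simpa [lift2_cast] using this

theorem gauss_comp {g : ℕ} {q : (Fin g × Bool → ℤ) → ZMod 2} (hq : IsQuadRef g q)
    (φ : (Fin g × Bool → ℤ) ≃ₗ[ℤ] (Fin g × Bool → ℤ)) :
    gauss g (q ∘ φ) = gauss g q := by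
  unfold gauss
  refine Fintype.sum_equiv (red2 g φ) _ _ fun v => ?_
  rw [Function.comp_apply]
  exact congrArg sgn (quad_congr hq fun p => (lift2_cast g (red2 g φ v) p).symm)

theorem arf_comp {g : ℕ} {q : (Fin g × Bool → ℤ) → ZMod 2} (hq : IsQuadRef g q)
    {φ : (Fin g × Bool → ℤ) ≃ₗ[ℤ] (Fin g × Bool → ℤ)} (hφ : IsSymp g φ) :
    arf g (q ∘ φ) = arf g q := by
  have h := gauss_comp hq φ
  rw [gauss_eq hq, gauss_eq (isQuadRef_comp hq hφ)] at h
  exact sgn_injective (mul_left_cancel₀ (by positivity) h)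

/-! ### Additivity and the classification -/

theorem quad_zero {g : ℕ} {q : (Fin g × Bool → ℤ) → ZMod 2} (hq : IsQuadRef g q) : q 0 = 0 := by
  simpa using quad_smul hq 0 0

theorem arf_dsum {g g' : ℕ} {q : (Fin g × Bool → ℤ) → ZMod 2}
    {q' : (Fin g' × Bool → ℤ) → ZMod 2} (hq : IsQuadRef g q) (hq' : IsQuadRef g' q') :
    arf (g + g') (dsumFun g g' q q') = arf g q + arf g' q' := by
  have hl : ∀ i b, dsumFun g g' q q' (stdBasis (g + g') (Fin.castAdd g' i, b)) =
      q (stdBasis g (i, b)) := by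
    intro i b
    have e1 : (fun p : Fin g × Bool =>
        stdBasis (g + g') (Fin.castAdd g' i, b) (Fin.castAdd g' p.1, p.2)) =
        stdBasis g (i, b) := by
      ext p
      simp [stdBasis, Prod.ext_iff]
    have e2 : (fun p : Fin g' × Bool =>
        stdBasis (g + g') (Fin.castAdd g' i, b) (Fin.natAdd g p.1, p.2)) = 0 := by
      ext p
      have : (Fin.natAdd g p.1 : Fin (g + g')) ≠ Fin.castAdd g' i := by
        intro h
        have := congrArg Fin.val h
        simp only [Fin.val_natAdd, Fin.val_castAdd] at this
        omega
      simp [stdBasis, Prod.ext_iff, this]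
    rw [dsumFun, e1, e2, quad_zero hq', add_zero]
  have hr : ∀ i b, dsumFun g g' q q' (stdBasis (g + g') (Fin.natAdd g i, b)) =
      q' (stdBasis g' (i, b)) := by
    intro i b
    have e1 : (fun p : Fin g' × Bool =>
        stdBasis (g + g') (Fin.natAdd g i, b) (Fin.natAdd g p.1, p.2)) =
        stdBasis g' (i, b) := by
      ext p
      simp [stdBasis, Prod.ext_iff]
    have e2 : (fun p : Fin g × Bool =>
        stdBasis (g + g') (Fin.natAdd g i, b) (Fin.castAdd g' p.1, p.2)) = 0 := by
      ext p
      have : (Fin.castAdd g' p.1 : Fin (g + g')) ≠ Fin.natAdd g i := by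
        intro h
        have := congrArg Fin.val h
        simp only [Fin.val_natAdd, Fin.val_castAdd] at this
        omega
      simp [stdBasis, Prod.ext_iff, this]
    rw [dsumFun, e1, e2, quad_zero hq, zero_add]
  simp only [arf, Fin.sum_univ_add, hl, hr]

/-- `(rk, Arf)` defines a monoid isomorphism from the monoid of `Sp`-orbits of
quadratic refinements (under direct sum) to `H = {0} ∪ (ℕ_{>0} × ℤ/2)`: it is additive for
direct sums, sends the trivial refinement (`g = 0`) to `0`, two refinements lie in the same
orbit if and only if they have the same image (so the map descends to a well-defined
injection on orbits), and it is surjective. -/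
theorem stmt_19 :
    (∀ x y : R19, phi (addR x y) = phi x + phi y) ∧
    (∀ q : QRef 0, phi ⟨0, q⟩ = 0) ∧
    (∀ x y : R19, relR x y ↔ phi x = phi y) ∧
    Function.Surjective phi := by
  refine ⟨?_, ?_, ?_, ?_⟩
  · intro x y
    exact Subtype.ext (Prod.ext rfl (arf_dsum x.2.2 y.2.2))
  · intro q
    exact Subtype.ext (Prod.ext rfl (by simp [phi, arf]))
  · rintro ⟨g, q⟩ ⟨g', q'⟩
    constructor
    · rintro ⟨h, φ, hφ, hq⟩
      dsimp only at h φ hφ hq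
      subst h
      have hq1 : q'.1 = q.1 ∘ φ := hq
      refine Subtype.ext (Prod.ext rfl ?_)
      show arf g q.1 = arf g q'.1
      rw [hq1, arf_comp q.2 hφ]
    · intro h
      have h1 : g = g' := congrArg (fun z : Hmon => z.1.1) h
      subst h1
      have h2 : arf g q.1 = arf g q'.1 := congrArg (fun z : Hmon => z.1.2) h
      obtain ⟨φ, hφ, e⟩ := exists_symp_of_arf_eq q.2 q'.2 h2
      exact ⟨rfl, φ, hφ, e⟩
  · rintro ⟨⟨m, c⟩, hm⟩
    have hm' : m = 0 → c = 0 := hm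
    -- The whole invariant `c` is placed on the first hyperbolic plane.
    have key : ∃ q : QRef m, arf m q.1 = c := by
      refine ⟨⟨stdQuad m (fun p => if p.1.val = 0 then c else 0), stdQuad_isQuadRef m _⟩, ?_⟩
      simp only [arf, stdQuad_stdBasis]
      cases m with
      | zero => simp [hm' rfl]
      | succ n =>
        rw [Fin.sum_univ_succ]
        simp [zmod2_mul_self]
    obtain ⟨q, hq⟩ := key
    exact ⟨⟨m, q⟩, Subtype.ext (Prod.ext rfl hq)⟩
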